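/- Let α, a, b, c, x₁, x₂ be real numbers with ρ := √(x₁² + x₂²) > 0, and let M = M(α,a,b,c,x₁,x₂) be the meridional EFG tensor. Then det(M) = 0 if and only if a = 0 or b² + c² − (α−1)·(a/ρ)·c = 0. -/

import Mathlib

/-- The meridional EFG (electric field gradient) tensor, with `a = E_ρ`,
`b = ∂E_ρ/∂x₀`, `c = ∂E_ρ/∂ρ`, `ρ = √(x₁² + x₂²)`. -/
noncomputable def meridionalEFG (α a b c x₁ x₂ : ℝ) : Matrix (Fin 3) (Fin 3) ℝ :=
  let ρ := Real.sqrt (x₁ ^ 2 + x₂ ^ 2)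
  !![-c + (α - 1) * a / ρ, b * x₁ / ρ, b * x₂ / ρ;
     b * x₁ / ρ, c * x₁ ^ 2 / ρ ^ 2 + (a / ρ) * x₂ ^ 2 / ρ ^ 2, (c - a / ρ) * x₁ * x₂ / ρ ^ 2;
     b * x₂ / ρ, (c - a / ρ) * x₁ * x₂ / ρ ^ 2, c * x₂ ^ 2 / ρ ^ 2 + (a / ρ) * x₁ ^ 2 / ρ ^ 2]

/-! Write `x₁ = ρ cos φ`, `x₂ = ρ sin φ`. Rotating about the `x₀`-axis by `φ` takes the tensor to the
cylindrical frame `(e₀, e_ρ, e_φ)`, where it splits into a `2 × 2` meridional block and the azimuthal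
eigenvalue `a / ρ`. The rotation has determinant one, so the determinant can be read off the blocks. -/

open Matrix

section CylindricalFrame

variable {R : Type*} [CommRing R]

/-- The rotation about the `x₀`-axis that sends the Cartesian frame to the cylindrical frame
`(e₀, e_ρ, e_φ)`, encoded by the cosine `u` and the sine `v` of the azimuth; it is orthogonal only if
`u ^ 2 + v ^ 2 = 1`. -/
def azimuthalRotation (u v : R) : Matrix (Fin 3) (Fin 3) R :=
  !![1, 0, 0;
     0, u, -v;
     0, v, u]

/-- The meridional EFG tensor in the cylindrical frame `(e₀, e_ρ, e_φ)`, with `t = E_ρ / ρ` as a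
parameter so that no division occurs. -/
def cylindricalEFG (α t b c : R) : Matrix (Fin 3) (Fin 3) R :=
  !![-c + (α - 1) * t, b, 0;
     b, c, 0;
     0, 0, t]

theorem det_azimuthalRotation (u v : R) : (azimuthalRotation u v).det = u ^ 2 + v ^ 2 := by
  simp only [azimuthalRotation, det_fin_three, of_apply, cons_val', cons_val]
  ring

theorem det_cylindricalEFG (α t b c : R) :
    (cylindricalEFG α t b c).det = -(t * (b ^ 2 + c ^ 2 - (α - 1) * t * c)) := by
  simp only [cylindricalEFG, det_fin_three, of_apply, cons_val', cons_val]
  ring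

end CylindricalFrame

-- On the axis `ρ = 0` this holds by the convention `x / 0 = 0` only.
theorem meridionalEFG_eq_mul_cylindricalEFG_mul_transpose (α a b c x₁ x₂ : ℝ) :
    meridionalEFG α a b c x₁ x₂ =
      azimuthalRotation (x₁ / √(x₁ ^ 2 + x₂ ^ 2)) (x₂ / √(x₁ ^ 2 + x₂ ^ 2)) *
        cylindricalEFG α (a / √(x₁ ^ 2 + x₂ ^ 2)) b c *
        (azimuthalRotation (x₁ / √(x₁ ^ 2 + x₂ ^ 2)) (x₂ / √(x₁ ^ 2 + x₂ ^ 2)))ᵀ := by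
  ext i j
  fin_cases i <;> fin_cases j <;>
    simp only [meridionalEFG, azimuthalRotation, cylindricalEFG, mul_apply, Fin.sum_univ_three,
      transpose_apply, of_apply, cons_val', cons_val, Fin.mk_one, Fin.zero_eta, Fin.reduceFinMk] <;>
    ring

theorem div_sqrt_sq_add_div_sqrt_sq {x y : ℝ} (h : √(x ^ 2 + y ^ 2) ≠ 0) :
    (x / √(x ^ 2 + y ^ 2)) ^ 2 + (y / √(x ^ 2 + y ^ 2)) ^ 2 = 1 := by
  have sq_sqrt_eq : √(x ^ 2 + y ^ 2) ^ 2 = x ^ 2 + y ^ 2 := Real.sq_sqrt (by positivity)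
  rw [div_pow, div_pow, ← add_div, sq_sqrt_eq, div_self (sq_sqrt_eq ▸ pow_ne_zero 2 h)]

theorem det_meridionalEFG {x₁ x₂ : ℝ} (α a b c : ℝ) (hρ : √(x₁ ^ 2 + x₂ ^ 2) ≠ 0) :
    (meridionalEFG α a b c x₁ x₂).det =
      -(a / √(x₁ ^ 2 + x₂ ^ 2) *
        (b ^ 2 + c ^ 2 - (α - 1) * (a / √(x₁ ^ 2 + x₂ ^ 2)) * c)) := by
  rw [meridionalEFG_eq_mul_cylindricalEFG_mul_transpose, det_mul, det_mul,
    det_transpose, det_azimuthalRotation, div_sqrt_sq_add_div_sqrt_sq hρ, one_mul, mul_one,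
    det_cylindricalEFG]

/-- the singular set of the meridional EFG tensor. -/
theorem meridionalEFG_singular_set
    (α a b c x₁ x₂ : ℝ) (hρ : 0 < Real.sqrt (x₁ ^ 2 + x₂ ^ 2)) :
    (meridionalEFG α a b c x₁ x₂).det = 0 ↔
      a = 0 ∨
      b ^ 2 + c ^ 2 - (α - 1) * (a / Real.sqrt (x₁ ^ 2 + x₂ ^ 2)) * c = 0 := by
  rw [det_meridionalEFG α a b c hρ.ne', neg_eq_zero, mul_eq_zero, div_eq_zero_iff,
    or_iff_left hρ.ne']
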